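/- The free product (F₂ × ℤ/2ℤ) * F₂ embeds into SL₃(ℤ), where F₂ is the free group of rank 2. -/

import Mathlib

/-!
Play ping-pong on `ℤ³` (homogeneous coordinates on `ℙ²(ℝ)`). The Sanov-type shears `x ↦ x + 20 y`
and `y ↦ y + 20 x` fix the third coordinate and commute with `τ = diag(-1, -1, 1)`. A nontrivial
word in them pushes any vector with `|x|` and `|y|` comparable, and `|z|` not much larger, close to
one of the coordinate axes of the line `z = 0`, while `τ` exchanges the points `[1 : 1 : 1]` and
`[-1 : -1 : 1]` of that region. A matrix `g` which contracts neighbourhoods of these axes to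
`[1 : 1 : 1]`, and whose inverse contracts them together with a neighbourhood of `[-1 : -1 : 1]`
to `[1 : -1 : 0]`, makes the shears with `τ`, and the conjugates of the shears by `g`,
play ping-pong against each other.
-/

open Set Function Cardinal
open scoped MatrixGroups

universe u

section BinaryPingPong

/-- The two factors of a binary free product as a family indexed by `Bool`, used to apply results on
`Monoid.CoprodI` to `Monoid.Coprod`. -/
def BoolFamily (G H : Type u) : Bool → Type u
  | true => G
  | false => H

variable {G H : Type u} [Group G] [Group H]

instance (b : Bool) : Group (BoolFamily G H b) :=
  match b with
  | true => inferInstanceAs (Group G)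
  | false => inferInstanceAs (Group H)

/-- The homomorphism out of the family `BoolFamily G H` with components `f` and `g`. -/
def BoolFamily.hom {K : Type*} [Monoid K] (f : G →* K) (g : H →* K) :
    ∀ b, BoolFamily G H b →* K
  | true => f
  | false => g

variable (G H) in
/-- The canonical comparison map from the binary to the indexed free product. -/
def coprodToCoprodI : Monoid.Coprod G H →* Monoid.CoprodI (BoolFamily G H) :=
  Monoid.Coprod.lift (Monoid.CoprodI.of (M := BoolFamily G H) (i := true))
    (Monoid.CoprodI.of (M := BoolFamily G H) (i := false))

theorem coprodI_lift_comp_coprodToCoprodI {K : Type*} [Monoid K] (f : G →* K) (g : H →* K) :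
    (Monoid.CoprodI.lift (BoolFamily.hom f g)).comp (coprodToCoprodI G H) =
      Monoid.Coprod.lift f g :=
  Monoid.Coprod.hom_ext (Monoid.CoprodI.lift_comp_of (BoolFamily.hom f g) true)
    (Monoid.CoprodI.lift_comp_of (BoolFamily.hom f g) false)

theorem coprodToCoprodI_injective : Injective (coprodToCoprodI G H) := by
  have hleft : (Monoid.CoprodI.lift (BoolFamily.hom Monoid.Coprod.inl Monoid.Coprod.inr)).comp
      (coprodToCoprodI G H) = MonoidHom.id _ := by
    rw [coprodI_lift_comp_coprodToCoprodI, Monoid.Coprod.lift_inl_inr]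
  exact LeftInverse.injective (DFunLike.congr_fun hleft)

theorem coprod_lift_injective_of_ping_pong {K α : Type*} [Group K] [MulAction K α]
    (f : G →* K) (g : H →* K) (hcard : 3 ≤ #G ∨ 3 ≤ #H) {X Y : Set α}
    (hX : X.Nonempty) (hY : Y.Nonempty) (hXY : Disjoint X Y)
    (hf : ∀ a ≠ 1, MapsTo (f a • ·) Y X) (hg : ∀ b ≠ 1, MapsTo (g b • ·) X Y) :
    Injective (Monoid.Coprod.lift f g) := by
  have hlift : Injective (Monoid.CoprodI.lift (BoolFamily.hom f g)) := by
    apply Monoid.CoprodI.lift_injective_of_ping_pong _ _ (fun b ↦ cond b X Y)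
    · exact Bool.forall_bool.2 ⟨hY, hX⟩
    · exact pairwise_on_bool.2 hXY
    · rintro (_ | _) (_ | _) hne x hx
      · exact absurd rfl hne
      · exact (hg x hx).image_subset
      · exact (hf x hx).image_subset
      · exact absurd rfl hne
    · exact Or.inr (Bool.exists_bool.2 hcard.symm)
  rw [← coprodI_lift_comp_coprodToCoprodI, MonoidHom.coe_comp]
  exact hlift.comp coprodToCoprodI_injective

-- The moves are `N → D → U` and `N → V` for the first factor, `U ∪ V → D → U → N` for the second.
theorem coprod_lift_noncommCoprod_conj_injective {F E : Type u} {K α : Type*} [Group F] [Group E]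
    [Group K] [MulAction K α] (ρ : F →* K) (ψ : E →* K) (hcomm : ∀ h e, Commute (ρ h) (ψ e))
    (g : K) (hcard : 3 ≤ #F) {D U V N : Set α} (hN : N.Nonempty) (hdisj : Disjoint (U ∪ V) N)
    (hρ : ∀ h ≠ 1, MapsTo (ρ h • ·) D U) (hψD : ∀ e, MapsTo (ψ e • ·) N D)
    (hψV : ∀ e ≠ 1, MapsTo (ψ e • ·) N V) (hg : MapsTo (g • ·) U N)
    (hg_inv : MapsTo (g⁻¹ • ·) (U ∪ V) D) :
    Injective (Monoid.Coprod.lift (ρ.noncommCoprod ψ hcomm)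
      ((MulAut.conj g).toMonoidHom.comp ρ)) := by
  have hfst : ∀ a ≠ 1, MapsTo (ρ.noncommCoprod ψ hcomm a • ·) N (U ∪ V) := by
    rintro ⟨h, e⟩ hne v hv
    simp only [MonoidHom.noncommCoprod_apply, mul_smul]
    by_cases hh : h = 1
    · subst hh
      have he : e ≠ 1 := fun he ↦ hne (Prod.ext rfl he)
      rw [map_one, one_smul]
      exact Or.inr (hψV e he hv)
    · exact Or.inl (hρ h hh (hψD e hv))
  have hsnd : ∀ h ≠ 1, MapsTo ((MulAut.conj g).toMonoidHom.comp ρ h • ·) (U ∪ V) N := by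
    intro h hh v hv
    change (g * ρ h * g⁻¹) • v ∈ N
    rw [mul_smul, mul_smul]
    exact hg (hρ h hh (hg_inv hv))
  obtain ⟨h, hh, -⟩ := Cardinal.exists_ne_ne_of_three_le hcard 1 1
  have hne : (h, (1 : E)) ≠ 1 := fun heq ↦ hh (congrArg Prod.fst heq)
  exact coprod_lift_injective_of_ping_pong _ _ (Or.inr hcard)
    (hN.image _ |>.mono (hfst _ hne).image_subset) hN hdisj hfst hsnd

end BinaryPingPong

section FreeGroupPingPong

variable {ι G : Type*} [Group G]

/-- The value of the letter `p` of a word of a free group under the substitution `a`: `a p.1` or its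
inverse, according to the sign `p.2`. -/
def letterValue (a : ι → G) (p : ι × Bool) : G := cond p.2 (a p.1) (a p.1)⁻¹

variable {a : ι → G}

theorem mapsTo_prod_map_letterValue {α : Type*} [MulAction G α] {D : Set α} {X : ι × Bool → Set α}
    (hD : ∀ p, MapsTo (letterValue a p • ·) D (X p))
    (hX : ∀ p q, (p.1 = q.1 → p.2 = q.2) → MapsTo (letterValue a p • ·) (X q) (X p))
    {p : ι × Bool} {L : List (ι × Bool)} (hL : FreeGroup.IsReduced (p :: L)) :
    MapsTo (((p :: L).map (letterValue a)).prod • ·) D (X p) := by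
  intro v hv
  induction L generalizing p with
  | nil => simpa using hD p hv
  | cons q L ih =>
    rw [FreeGroup.isReduced_cons_cons] at hL
    simp only [List.map_cons, List.prod_cons, mul_smul] at ih ⊢
    exact hX p q hL.1 (ih hL.2)

theorem mapsTo_freeGroup_lift_of_ping_pong {α : Type*} [MulAction G α] {D : Set α}
    {X : ι × Bool → Set α} (hD : ∀ p, MapsTo (letterValue a p • ·) D (X p))
    (hX : ∀ p q, (p.1 = q.1 → p.2 = q.2) → MapsTo (letterValue a p • ·) (X q) (X p))
    {h : FreeGroup ι} (hh : h ≠ 1) :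
    MapsTo (FreeGroup.lift a h • ·) D (⋃ p, X p) := by
  classical
  obtain ⟨p, L, hpL⟩ := List.exists_cons_of_ne_nil (mt FreeGroup.toWord_eq_nil_iff.1 hh)
  have hlift : FreeGroup.lift a h = ((p :: L).map (letterValue a)).prod := by
    rw [← hpL, ← FreeGroup.mk_toWord (x := h), FreeGroup.lift_mk, FreeGroup.mk_toWord]
    rfl
  rw [hlift]
  have hreduced : FreeGroup.IsReduced (p :: L) := hpL ▸ FreeGroup.isReduced_toWord
  exact (mapsTo_prod_map_letterValue hD hX hreduced).mono_right (subset_iUnion X p)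

theorem commute_freeGroup_lift {t : G} (ht : ∀ i, Commute (a i) t) (h : FreeGroup ι) :
    Commute (FreeGroup.lift a h) t := by
  refine FreeGroup.induction_on h ?_ (fun i ↦ ?_) (fun i hi ↦ ?_) (fun x y hx hy ↦ ?_)
  · simpa only [map_one] using Commute.one_left t
  · simpa only [FreeGroup.lift_apply_of] using ht i
  · simpa only [map_inv] using hi.inv_left
  · simpa only [map_mul] using hx.mul_left hy

end FreeGroupPingPong

/-- The homomorphism from the cyclic group of order `n` sending its standard generator to `x`, for
an element `x` whose `n`-th power is trivial. -/
def zmodPowersHom {M : Type*} [Monoid M] {n : ℕ} [NeZero n] (x : M) (hx : x ^ n = 1) :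
    Multiplicative (ZMod n) →* M where
  toFun e := x ^ e.toAdd.val
  map_one' := by simp
  map_mul' e e' := by
    rw [toAdd_mul, ZMod.val_add, ← pow_eq_pow_mod _ hx, pow_add]

theorem zmodPowersHom_of_ne_one {M : Type*} [Monoid M] {x : M} (hx : x ^ 2 = 1)
    {e : Multiplicative (ZMod 2)} (he : e ≠ 1) : zmodPowersHom x hx e = x := by
  obtain rfl : e = Multiplicative.ofAdd 1 := by decide +revert
  exact pow_one x

section SpecialLinear

open Matrix.SpecialLinearGroup

theorem transvection_smul {n R : Type*} [DecidableEq n] [Fintype n] [CommRing R] {i j : n}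
    (hij : i ≠ j) (c : R) (v : n → R) :
    transvection hij c • v = v + Pi.single i (c * v j) := by
  rw [Matrix.SpecialLinearGroup.smul_def, Matrix.smul_eq_mulVec, transvection_coe,
    Matrix.add_mulVec, Matrix.one_mulVec, Matrix.single_mulVec_eq, ← Pi.single_smul', smul_eq_mul,
    mul_one]

theorem castSucc_ne_castSucc_rev (i : Fin 2) : i.castSucc ≠ i.rev.castSucc := by
  decide +revert

/-- The generators of the free group. Of the coordinates `0` and `1` of a vector, `shear i` adds
`20` times the other one to the `i`-th one. -/
def shear (i : Fin 2) : SL(3, ℤ) :=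
  transvection (castSucc_ne_castSucc_rev i) 20

theorem letterValue_shear_smul (p : Fin 2 × Bool) (v : Fin 3 → ℤ) :
    letterValue shear p • v =
      v + Pi.single p.1.castSucc (cond p.2 20 (-20) * v p.1.rev.castSucc) := by
  obtain ⟨i, _ | _⟩ := p
  · simp only [letterValue, shear, cond_false, transvection_inv, transvection_smul]
  · simp only [letterValue, shear, cond_true, transvection_smul]

/-- The involution `diag(-1, -1, 1)`. -/
def halfTurn : SL(3, ℤ) :=
  ⟨Matrix.diagonal ![-1, -1, 1], by simp [Fin.prod_univ_three]⟩

theorem halfTurn_sq : halfTurn ^ 2 = 1 := by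
  decide +kernel

theorem halfTurn_smul (v : Fin 3 → ℤ) : halfTurn • v = ![-v 0, -v 1, v 2] := by
  rw [Matrix.SpecialLinearGroup.smul_def, Matrix.smul_eq_mulVec]
  ext i
  fin_cases i <;> simp [halfTurn, Matrix.mulVec_diagonal]

theorem commute_shear_halfTurn (i : Fin 2) : Commute (shear i) halfTurn := by
  unfold Commute SemiconjBy
  decide +kernel +revert

/-- The matrix conjugating the first copy of the free group to the second one. It contracts towards
`[1 : 1 : 1]` away from the line `x + y = 0`, and its inverse contracts towards `[1 : -1 : 0]` away
from the line `x + y = 2 z`. -/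
def conjugator : SL(3, ℤ) :=
  ⟨!![10, 11, 1; 9, 10, -1; 9, 10, 0], by simp [Matrix.det_fin_three]⟩

theorem conjugator_smul (v : Fin 3 → ℤ) :
    conjugator • v = ![10 * v 0 + 11 * v 1 + v 2, 9 * v 0 + 10 * v 1 - v 2,
      9 * v 0 + 10 * v 1] := by
  rw [Matrix.SpecialLinearGroup.smul_def, Matrix.smul_eq_mulVec]
  ext i
  fin_cases i <;> simp [conjugator, Matrix.mulVec, dotProduct, Fin.sum_univ_three, sub_eq_add_neg]

theorem conjugator_inv_smul (v : Fin 3 → ℤ) :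
    conjugator⁻¹ • v = ![10 * (v 0 + v 1 - 2 * v 2) - v 2, v 2 - 9 * (v 0 + v 1 - 2 * v 2),
      v 2 - v 1] := by
  rw [inv_smul_eq_iff, conjugator_smul]
  simp only [Matrix.cons_val]
  ext i
  fin_cases i <;> ring_nf <;> rfl

/-- The vectors whose coordinates `0` and `1` are nonzero and agree up to a factor `2`, and whose
coordinate `2` is at most twice either of them: every nontrivial word in the shears moves them close
to the axes `0` and `1`. -/
def balancedCone : Set (Fin 3 → ℤ) :=
  {v | ∀ i : Fin 2, v i.castSucc ≠ 0 ∧ (v i.castSucc).natAbs ≤ 2 * (v i.rev.castSucc).natAbs ∧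
    (v 2).natAbs ≤ 2 * (v i.castSucc).natAbs}

theorem mem_balancedCone_iff {v : Fin 3 → ℤ} : v ∈ balancedCone ↔
    (v 0 ≠ 0 ∧ (v 0).natAbs ≤ 2 * (v 1).natAbs ∧ (v 2).natAbs ≤ 2 * (v 0).natAbs) ∧
      (v 1 ≠ 0 ∧ (v 1).natAbs ≤ 2 * (v 0).natAbs ∧ (v 2).natAbs ≤ 2 * (v 1).natAbs) :=
  Fin.forall_fin_two

/-- The attracting set of the letter `p` of a word in the shears: the half of a neighbourhood of the
`p.1`-th coordinate axis where the coordinates `0` and `1` have equal signs, or opposite signs,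
according to `p.2`. The sign condition is encoded as the last inequality. -/
def axisCone (p : Fin 2 × Bool) : Set (Fin 3 → ℤ) :=
  {v | 2 * (v p.1.rev.castSucc).natAbs ≤ (v p.1.castSucc).natAbs ∧
    8 * (v 2).natAbs < (v p.1.castSucc).natAbs ∧
    (v p.1.castSucc).natAbs ≤ (v p.1.castSucc + cond p.2 1 (-1) * v p.1.rev.castSucc).natAbs}

/-- A neighbourhood of `[1 : 1 : 1]`. -/
def diagonalCone : Set (Fin 3 → ℤ) :=
  {v | v 2 ≠ 0 ∧ 4 * (v 0 - v 2).natAbs ≤ (v 2).natAbs ∧ 4 * (v 1 - v 2).natAbs ≤ (v 2).natAbs}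

theorem letterValue_shear_smul_mem_axisCone_iff {p : Fin 2 × Bool} {v : Fin 3 → ℤ} :
    letterValue shear p • v ∈ axisCone p ↔
      let x := v p.1.castSucc
      let y := v p.1.rev.castSucc
      let x' := x + cond p.2 20 (-20) * y
      2 * y.natAbs ≤ x'.natAbs ∧ 8 * (v 2).natAbs < x'.natAbs ∧
        x'.natAbs ≤ (x' + cond p.2 1 (-1) * y).natAbs := by
  have hy : p.1.rev.castSucc ≠ p.1.castSucc := (castSucc_ne_castSucc_rev p.1).symm
  have hz : 2 ≠ p.1.castSucc := (Fin.castSucc_ne_last p.1).symm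
  simp only [letterValue_shear_smul, axisCone, mem_ofPred_eq, Pi.add_apply, Pi.single_eq_same,
    Pi.single_eq_of_ne hy, Pi.single_eq_of_ne hz, add_zero]

theorem mapsTo_letterValue_shear_balancedCone (p : Fin 2 × Bool) :
    MapsTo (letterValue shear p • ·) balancedCone (axisCone p) := by
  intro v hv
  refine letterValue_shear_smul_mem_axisCone_iff.2 ?_
  obtain ⟨i, b⟩ := p
  obtain ⟨-, hxy, -⟩ := hv i
  obtain ⟨hy, -, hzy⟩ := hv i.rev
  cases b <;> dsimp only [cond_true, cond_false] <;> omega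

theorem mapsTo_letterValue_shear_axisCone (p q : Fin 2 × Bool) (hpq : p.1 = q.1 → p.2 = q.2) :
    MapsTo (letterValue shear p • ·) (axisCone q) (axisCone p) := by
  rintro v ⟨hyx, hzx, hsign⟩
  refine letterValue_shear_smul_mem_axisCone_iff.2 ?_
  obtain ⟨i, b⟩ := p
  obtain ⟨j, c⟩ := q
  have hij : i = j ∨ i = j.rev := by clear hpq hyx hzx hsign; decide +revert
  rcases hij with rfl | rfl
  · obtain rfl : b = c := hpq rfl
    cases b <;> dsimp only [cond_true, cond_false] at hyx hzx hsign ⊢ <;> omega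
  · dsimp only at hyx hzx
    cases b <;> dsimp only [cond_true, cond_false] <;> rw [Fin.rev_rev] <;> omega

theorem mapsTo_lift_shear {h : FreeGroup (Fin 2)} (hh : h ≠ 1) :
    MapsTo (FreeGroup.lift shear h • ·) balancedCone (⋃ p, axisCone p) :=
  mapsTo_freeGroup_lift_of_ping_pong mapsTo_letterValue_shear_balancedCone
    mapsTo_letterValue_shear_axisCone hh

theorem axisCone_subset_union (p : Fin 2 × Bool) :
    axisCone p ⊆ {v | 8 * (v 2).natAbs < (v 0).natAbs ∧ 2 * (v 1).natAbs ≤ (v 0).natAbs} ∪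
      {v | 8 * (v 2).natAbs < (v 1).natAbs ∧ 2 * (v 0).natAbs ≤ (v 1).natAbs} := by
  rintro v ⟨hyx, hzx, -⟩
  match p with
  | (0, _) => exact Or.inl ⟨hzx, hyx⟩
  | (1, _) => exact Or.inr ⟨hzx, hyx⟩

theorem mapsTo_conjugator_iUnion_axisCone :
    MapsTo (conjugator • ·) (⋃ p, axisCone p) diagonalCone := by
  refine mapsTo_iUnion.2 fun p v hv ↦ ?_
  simp only [conjugator_smul, diagonalCone, mem_ofPred_eq, Matrix.cons_val]
  rcases axisCone_subset_union p hv with ⟨hz, hyx⟩ | ⟨hz, hxy⟩ <;> omega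

theorem mapsTo_conjugator_inv :
    MapsTo (conjugator⁻¹ • ·) ((⋃ p, axisCone p) ∪ (halfTurn • ·) ⁻¹' diagonalCone)
      balancedCone := by
  rintro v (hv | hv) <;>
    simp only [conjugator_inv_smul, mem_balancedCone_iff, Matrix.cons_val]
  · obtain ⟨p, hp⟩ := mem_iUnion.1 hv
    rcases axisCone_subset_union p hp with ⟨hz, hyx⟩ | ⟨hz, hxy⟩ <;> omega
  · simp only [halfTurn_smul, diagonalCone, mem_ofPred_eq, mem_preimage, Matrix.cons_val] at hv
    omega

theorem diagonalCone_subset_balancedCone : diagonalCone ⊆ balancedCone := by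
  rintro v ⟨hz, hx, hy⟩
  rw [mem_balancedCone_iff]
  omega

theorem mapsTo_halfTurn_balancedCone : MapsTo (halfTurn • ·) balancedCone balancedCone := by
  intro v hv
  simpa [mem_balancedCone_iff, halfTurn_smul] using hv

theorem disjoint_axisCone_union_diagonalCone :
    Disjoint ((⋃ p, axisCone p) ∪ (halfTurn • ·) ⁻¹' diagonalCone) diagonalCone := by
  refine disjoint_left.2 ?_
  rintro v (hv | hv) ⟨-, hxz, hyz⟩
  · obtain ⟨p, hp⟩ := mem_iUnion.1 hv
    rcases axisCone_subset_union p hp with ⟨hzx, hyx⟩ | ⟨hzy, hxy⟩ <;> omega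
  · simp only [halfTurn_smul, diagonalCone, mem_ofPred_eq, mem_preimage, Matrix.cons_val] at hv
    omega

theorem mapsTo_zmodPowersHom_halfTurn_balancedCone (e : Multiplicative (ZMod 2)) :
    MapsTo (zmodPowersHom halfTurn halfTurn_sq e • ·) diagonalCone balancedCone := by
  intro v hv
  by_cases he : e = 1
  · simpa [he] using diagonalCone_subset_balancedCone hv
  · rw [zmodPowersHom_of_ne_one halfTurn_sq he]
    exact mapsTo_halfTurn_balancedCone (diagonalCone_subset_balancedCone hv)

theorem mapsTo_zmodPowersHom_halfTurn_preimage {e : Multiplicative (ZMod 2)} (he : e ≠ 1) :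
    MapsTo (zmodPowersHom halfTurn halfTurn_sq e • ·) diagonalCone
      ((halfTurn • ·) ⁻¹' diagonalCone) := by
  intro v hv
  rw [zmodPowersHom_of_ne_one halfTurn_sq he, mem_preimage, smul_smul, ← sq, halfTurn_sq, one_smul]
  exact hv

end SpecialLinear

/-- The free product `(F₂ × ℤ/2ℤ) * F₂` embeds into `SL₃(ℤ)`. -/
theorem stmt_17 :
    ∃ f : Monoid.Coprod (FreeGroup (Fin 2) × Multiplicative (ZMod 2))
        (FreeGroup (Fin 2)) →* Matrix.SpecialLinearGroup (Fin 3) ℤ,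
      Function.Injective f := by
  have hcomm (h : FreeGroup (Fin 2)) (e : Multiplicative (ZMod 2)) :
      Commute (FreeGroup.lift shear h) (zmodPowersHom halfTurn halfTurn_sq e) :=
    (commute_freeGroup_lift commute_shear_halfTurn h).pow_right _
  have hcard : 3 ≤ #(FreeGroup (Fin 2)) := natCast_lt_aleph0.le.trans (aleph0_le_mk _)
  have hne : diagonalCone.Nonempty := ⟨![1, 1, 1], by simp [diagonalCone]⟩
  exact ⟨_, coprod_lift_noncommCoprod_conj_injective (FreeGroup.lift shear)
    (zmodPowersHom halfTurn halfTurn_sq) hcomm conjugator hcard hne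
    disjoint_axisCone_union_diagonalCone (fun _ ↦ mapsTo_lift_shear)
    mapsTo_zmodPowersHom_halfTurn_balancedCone (fun _ ↦ mapsTo_zmodPowersHom_halfTurn_preimage)
    mapsTo_conjugator_iUnion_axisCone mapsTo_conjugator_inv⟩
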